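/- Validity of the LP-dual-based heuristic bound (first part of Proposition 1): for every y ∈ Ω and every pair (λ, μ) with λ : Fin m → ℝ, λ ≥ 0, μ : Fin n → ℝ, μ ≤ 0, and (Aᵀ λ) i + μ i ≤ l i + (u i − l i) * y i for all i, the quantity Σ_i (l i + (u i − l i) * y i) * y i − Σ_k b k * λ k − Σ_i μ i is an upper bound on min_{y'∈Ω} R_{y'}, the optimal robustness cost. -/

import Mathlib

open Finset

/-- Validity of the LP-dual-based heuristic bound (first part of Proposition 1):
for every `y ∈ Ω` and every dual-feasible pair `(λ, μ)` (that is, `λ ≥ 0`, `μ ≤ 0` and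
`(Aᵀ λ) i + μ i ≤ l i + (u i - l i) * y i` for all `i`), the quantity
`∑ i, (l i + (u i - l i) * y i) * y i - ∑ k, b k * λ k - ∑ i, μ i` is an upper bound on the
optimal robustness cost `min_{y' ∈ Ω} R_{y'}`. -/
theorem lp_dual_heuristic_upper_bound
    (m n : ℕ) (hm : 0 < m) (hn : 0 < n)
    (A : Matrix (Fin m) (Fin n) ℝ) (b : Fin m → ℝ)
    (l u : Fin n → ℝ) (hl : ∀ i, 0 ≤ l i) (hlu : ∀ i, l i ≤ u i)
    (Ω : Set (Fin n → ℝ))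
    (hΩdef : Ω = {y : Fin n → ℝ | (∀ k, b k ≤ A.mulVec y k) ∧ ∀ i, y i = 0 ∨ y i = 1})
    (hΩne : Ω.Nonempty)
    (y : Fin n → ℝ) (hy : y ∈ Ω)
    (lam : Fin m → ℝ) (hlam : ∀ k, 0 ≤ lam k)
    (mu : Fin n → ℝ) (hmu : ∀ i, mu i ≤ 0)
    (hdual : ∀ i, A.transpose.mulVec lam i + mu i ≤ l i + (u i - l i) * y i) :
    sInf {r : ℝ | ∃ y' ∈ Ω,
        r = sSup {t : ℝ | ∃ c : Fin n → ℝ, (∀ i, l i ≤ c i ∧ c i ≤ u i) ∧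
          t = (∑ i, c i * y' i) - sInf {v : ℝ | ∃ x ∈ Ω, v = ∑ i, c i * x i}}} ≤
      (∑ i, (l i + (u i - l i) * y i) * y i) - (∑ k, b k * lam k) - (∑ i, mu i) := by
  subst hΩdef
  have hnn : ∀ c : Fin n → ℝ, (∀ i, l i ≤ c i ∧ c i ≤ u i) →
      ∀ x : Fin n → ℝ, (∀ i, x i = 0 ∨ x i = 1) → 0 ≤ ∑ i, c i * x i := by
    intro c hc x hx
    refine Finset.sum_nonneg fun i _ => mul_nonneg ((hl i).trans (hc i).1) ?_
    rcases hx i with h | h <;> rw [h] <;> norm_num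
  refine le_trans (csInf_le (⟨0, ?_⟩ : BddBelow _) ⟨y, hy, rfl⟩) ?_
  · rintro r ⟨y', hy', rfl⟩
    apply Real.sSup_nonneg
    rintro t ⟨c, hc, rfl⟩
    rw [sub_nonneg]
    refine csInf_le ⟨0, ?_⟩ ⟨y', hy', rfl⟩
    rintro v ⟨x, hx, rfl⟩
    exact hnn c hc x hx.2
  · refine csSup_le ⟨_, l, fun i => ⟨le_refl _, hlu i⟩, rfl⟩ ?_
    rintro t ⟨c, hc, rfl⟩
    rw [sub_le_comm]
    refine le_csInf ⟨_, y, hy, rfl⟩ ?_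
    rintro v ⟨x, hx, rfl⟩
    have h1 : ∑ i, (c i * y i - c i * x i) ≤
        ∑ i, ((l i + (u i - l i) * y i) * y i - (l i + (u i - l i) * y i) * x i) := by
      refine Finset.sum_le_sum fun i _ => ?_
      have h2 := hc i
      rcases hy.2 i with h | h <;> rcases hx.2 i with h' | h' <;> rw [h, h'] <;> linarith
    have h2 : ∑ i, (A.transpose.mulVec lam i * x i + mu i) ≤
        ∑ i, (l i + (u i - l i) * y i) * x i := by
      refine Finset.sum_le_sum fun i _ => ?_
      have h2 := hdual i
      have h3 := hmu i
      rcases hx.2 i with h' | h' <;> rw [h'] <;> linarith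
    have h3 : ∑ i, A.transpose.mulVec lam i * x i = ∑ k, A.mulVec x k * lam k := by
      simp only [Matrix.mulVec, dotProduct, Matrix.transpose_apply, Finset.sum_mul]
      rw [Finset.sum_comm]
      refine Finset.sum_congr rfl fun k _ => Finset.sum_congr rfl fun i _ => ?_
      ring
    have h4 : ∑ k, b k * lam k ≤ ∑ k, A.mulVec x k * lam k :=
      Finset.sum_le_sum fun k _ => mul_le_mul_of_nonneg_right (hx.1 k) (hlam k)
    simp only [Finset.sum_sub_distrib] at h1
    rw [Finset.sum_add_distrib] at h2
    linarith
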